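/- arXiv:1407.7799 — 5 statements merged into one kernel-verified Lean document; each statement's English description precedes it below -/
import Mathlib

section
/- Let k and j be integers with 2 ≤ j ≤ k, and let n be a positive integer with n ≥ k·ln(2k). Define s_j = j^n / (j!·(k−j)!), regarded as a real number. Then s_j ≥ 2·s_{j−1}. -/
/-- For integers `2 ≤ j ≤ k` and a positive integer `n ≥ k·ln(2k)`, the quantity
`s_j = j^n / (j!·(k−j)!)` satisfies `s_j ≥ 2·s_{j−1}`. -/
theorem stmt1 (k j n : ℕ) (hj : 2 ≤ j) (hjk : j ≤ k) (hn : 0 < n)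
    (hnk : (n : ℝ) ≥ (k : ℝ) * Real.log (2 * (k : ℝ))) :
    (j : ℝ) ^ n / ((Nat.factorial j : ℝ) * (Nat.factorial (k - j) : ℝ)) ≥
      2 * (((j - 1 : ℕ) : ℝ) ^ n /
        ((Nat.factorial (j - 1) : ℝ) * (Nat.factorial (k - (j - 1)) : ℝ))) := by
  obtain ⟨m, rfl⟩ : ∃ m, j = m + 1 := ⟨j - 1, by omega⟩
  obtain ⟨d, rfl⟩ : ∃ d, k = m + 1 + d := ⟨k - (m + 1), by omega⟩
  have e1 : m + 1 + d - (m + 1) = d := by omega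
  have e2 : m + 1 + d - (m + 1 - 1) = d + 1 := by omega
  rw [e1, e2, Nat.add_sub_cancel, Nat.factorial_succ m, Nat.factorial_succ d]
  set K : ℝ := ((m + 1 + d : ℕ) : ℝ) with hK
  have hKm : (m : ℝ) + 1 ≤ K := by
    rw [hK]; push_cast; linarith [Nat.cast_nonneg (α := ℝ) d]
  have hm0 : (0 : ℝ) < (m : ℝ) + 1 := by positivity
  have hKpos : 0 < K := by linarith
  have hlog : Real.log (2 * K) ≤ n * (1 / ((m : ℝ) + 1)) := by
    have h0 : 0 ≤ Real.log (2 * K) :=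
      Real.log_nonneg (by linarith [Nat.cast_nonneg (α := ℝ) m])
    rw [mul_one_div, le_div_iff₀ hm0]
    nlinarith
  have hexp : 2 * K ≤ Real.exp (1 / ((m : ℝ) + 1)) ^ n := by
    rw [← Real.exp_nat_mul, ← Real.log_le_iff_le_exp (by positivity)]
    exact hlog
  have hbase : (m : ℝ) * Real.exp (1 / ((m : ℝ) + 1)) ≤ (m : ℝ) + 1 := by
    have h := Real.add_one_le_exp (-(1 / ((m : ℝ) + 1)))
    have h2 : (m : ℝ) = (m + 1) * (-(1 / ((m : ℝ) + 1)) + 1) := by field_simp; ring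
    have h3 : (m : ℝ) ≤ (m + 1) * Real.exp (-(1 / ((m : ℝ) + 1))) := by
      calc (m : ℝ) = (m + 1) * (-(1 / ((m : ℝ) + 1)) + 1) := h2
        _ ≤ _ := by gcongr
    calc _ ≤ ((m + 1) * Real.exp (-(1 / ((m : ℝ) + 1)))) * Real.exp (1 / ((m : ℝ) + 1)) := by
          gcongr
      _ = _ := by rw [mul_assoc, ← Real.exp_add]; simp
  have hpow : (m : ℝ) ^ n * (2 * K) ≤ ((m : ℝ) + 1) ^ n := by
    calc (m : ℝ) ^ n * (2 * K) ≤ (m : ℝ) ^ n * Real.exp (1 / ((m : ℝ) + 1)) ^ n := by gcongr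
      _ = ((m : ℝ) * Real.exp (1 / ((m : ℝ) + 1))) ^ n := by rw [mul_pow]
      _ ≤ _ := by gcongr
  have hkey : 2 * (m : ℝ) ^ n * (m + 1) ≤ ((m : ℝ) + 1) ^ n * (d + 1) := by
    have h1 : (m : ℝ) ^ n * (m + 1) ≤ (m : ℝ) ^ n * K := by gcongr
    have h2 : 0 ≤ ((m : ℝ) + 1) ^ n * d := by positivity
    linarith
  push_cast
  have hf : (0 : ℝ) < (m.factorial : ℝ) * d.factorial := by positivity
  rw [ge_iff_le, ← mul_div_assoc, div_le_div_iff₀ (by positivity) (by positivity)]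
  have := mul_le_mul_of_nonneg_right hkey hf.le
  linarith
end

section
/- Let n and k be positive integers with n ≥ k·ln(2k). Then (1/2)·k^n/k! ≤ S(n,k) ≤ k^n/k!. -/
/-- Stirling numbers of the second kind: `stirling2 n k` is the number of
partitions of an `n`-element set into `k` nonempty blocks. -/
def stirling2 : ℕ → ℕ → ℕ
  | 0, 0 => 1
  | 0, _ + 1 => 0
  | _ + 1, 0 => 0
  | n + 1, k + 1 => (k + 1) * stirling2 n (k + 1) + stirling2 n k

theorem stirling2_sum (m n : ℕ) :
    ∑ j ∈ Finset.range (m + 1), stirling2 n j * m.descFactorial j = m ^ n := by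
  induction n with
  | zero =>
    rw [Finset.sum_range_succ']
    simp [stirling2]
  | succ n ih =>
    have h1 : ∑ j ∈ Finset.range (m + 1), j * stirling2 n j * m.descFactorial j
        = ∑ j ∈ Finset.range m, (j + 1) * stirling2 n (j + 1) * m.descFactorial (j + 1) := by
      rw [Finset.sum_range_succ']; simp
    have h2 : ∑ j ∈ Finset.range (m + 1), stirling2 n j * m.descFactorial (j + 1)
        = ∑ j ∈ Finset.range m, stirling2 n j * m.descFactorial (j + 1) := by
      rw [Finset.sum_range_succ]; simp
    rw [Finset.sum_range_succ', pow_succ, ← ih, Finset.sum_mul]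
    simp only [stirling2, add_mul (_ * _) (stirling2 _ _), Finset.sum_add_distrib, zero_mul, add_zero]
    rw [← h1, ← h2, ← Finset.sum_add_distrib]
    refine Finset.sum_congr rfl fun j hj => ?_
    have hj' : j ≤ m := by have := Finset.mem_range.1 hj; omega
    obtain ⟨d, rfl⟩ := Nat.exists_eq_add_of_le hj'
    rw [Nat.descFactorial_succ, Nat.add_sub_cancel_left]
    ring

theorem stirling2_upper (n k : ℕ) : stirling2 n k * k.factorial ≤ k ^ n := by
  rw [← stirling2_sum k n, Finset.sum_range_succ, Nat.descFactorial_self]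
  exact Nat.le_add_left _ _

theorem stirling2_lower (n k : ℕ) :
    (k + 1) ^ n ≤ stirling2 n (k + 1) * (k + 1).factorial + (k + 1) * k ^ n := by
  rw [← stirling2_sum (k + 1) n, Finset.sum_range_succ, Nat.descFactorial_self, add_comm,
    ← stirling2_sum k n, Finset.mul_sum]
  refine Nat.add_le_add_left (Finset.sum_le_sum fun j hj => ?_) _
  have hj' := Finset.mem_range.1 hj
  have h := Nat.succ_descFactorial k j
  have h3 : (k + 1).descFactorial j ≤ (k + 1) * k.descFactorial j := by
    rw [← h]
    exact Nat.le_mul_of_pos_left _ (by omega)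
  calc _ ≤ stirling2 n j * ((k + 1) * k.descFactorial j) := Nat.mul_le_mul_left _ h3
    _ = _ := by ring

/-- For positive integers `n`, `k` with `n ≥ k·ln(2k)`:
`(1/2)·k^n/k! ≤ S(n,k) ≤ k^n/k!`. -/
theorem stmt2 (n k : ℕ) (hn : 0 < n) (hk : 0 < k)
    (h : (n : ℝ) ≥ (k : ℝ) * Real.log (2 * (k : ℝ))) :
    (1 / 2 : ℝ) * (k : ℝ) ^ n / (Nat.factorial k : ℝ) ≤ (stirling2 n k : ℝ) ∧
      (stirling2 n k : ℝ) ≤ (k : ℝ) ^ n / (Nat.factorial k : ℝ) := by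
  have hf : (0 : ℝ) < (Nat.factorial k : ℝ) := by exact_mod_cast k.factorial_pos
  refine ⟨?_, ?_⟩
  · rw [div_le_iff₀ hf]
    obtain ⟨m, rfl⟩ : ∃ m, k = m + 1 := ⟨k - 1, by omega⟩
    have hl : ((m : ℝ) + 1) ^ n ≤ (stirling2 n (m + 1) : ℝ) * ((m + 1).factorial : ℝ)
        + ((m : ℝ) + 1) * (m : ℝ) ^ n := by exact_mod_cast stirling2_lower n m
    push_cast at h ⊢
    have hK : (0 : ℝ) < (m : ℝ) + 1 := by positivity
    set K : ℝ := (m : ℝ) + 1 with hKdef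
    have hm : (m : ℝ) ≤ K * Real.exp (-(1 / K)) := by
      have h1 := Real.add_one_le_exp (-(1 / K))
      have h2 := mul_le_mul_of_nonneg_left h1 hK.le
      have h3 : K * (-(1 / K) + 1) = m := by field_simp; rw [hKdef]; ring
      rwa [h3] at h2
    have hp : (m : ℝ) ^ n ≤ K ^ n * Real.exp (-(n / K)) := by
      calc (m : ℝ) ^ n ≤ (K * Real.exp (-(1 / K))) ^ n := by gcongr
        _ = _ := by
          rw [mul_pow, ← Real.exp_nat_mul]; congr 2; ring
    have he : Real.exp (-(n / K)) ≤ 1 / (2 * K) := by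
      have h1 : Real.log (2 * K) ≤ n / K := by
        rw [le_div_iff₀ hK]; linarith
      calc Real.exp (-(n / K)) ≤ Real.exp (-Real.log (2 * K)) :=
            Real.exp_le_exp.2 (neg_le_neg h1)
        _ = _ := by rw [Real.exp_neg, Real.exp_log (by positivity), one_div]
    have hfin : K * (m : ℝ) ^ n ≤ 1 / 2 * K ^ n := by
      calc K * (m : ℝ) ^ n ≤ K * (K ^ n * (1 / (2 * K))) := by
            gcongr
            exact hp.trans (by gcongr)
        _ = _ := by field_simp
    linarith
  · rw [le_div_iff₀ hf]
    exact_mod_cast stirling2_upper n k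
end

section
/- Let d ≥ 2 be an integer and set N = d(d+1)/2, the number of pairs (ℓ,s) of integers with 0 ≤ ℓ < s ≤ d. There exist integers d < k_1 < k_2 < ⋯ < k_N such that the N×N real matrix F, with rows indexed by i ∈ {1,…,N}, columns indexed by the pairs (ℓ,s) with 0 ≤ ℓ < s ≤ d, and entries F_{i,(ℓ,s)} = f_{ℓ,s}(k_i), has full rank (is nonsingular). -/
/-- The function `f_{ℓ,s}(k) = k⁽ℓ⁾ · (s−ℓ)! · S(k−ℓ, s−ℓ)`. -/
def fls (ℓ s k : ℕ) : ℕ :=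
  k.descFactorial ℓ * (s - ℓ).factorial * stirling2 (k - ℓ) (s - ℓ)


theorem s2_zero (n : ℕ) : stirling2 n 0 ≤ 0 ^ n := by
  cases n <;> simp [stirling2]

theorem s2_upper_aux (n : ℕ) : (∀ m, stirling2 n (m+1) + m ^ n ≤ (m+1)^n) := by
  induction n with
  | zero => intro m; simp [stirling2]
  | succ n ih =>
    intro m
    have h1 := ih m
    have h2 : stirling2 n m ≤ m ^ n := by
      cases m with
      | zero => exact s2_zero n
      | succ m => have := ih m; omega
    simp only [stirling2, pow_succ]
    nlinarith

theorem s2_upper (n m : ℕ) : stirling2 n m ≤ m ^ n := by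
  cases m with
  | zero => exact s2_zero n
  | succ m => have := s2_upper_aux n m; omega

theorem s2_self (m : ℕ) : 1 ≤ stirling2 m m := by
  induction m with
  | zero => simp [stirling2]
  | succ m ih => simp only [stirling2]; omega

theorem s2_lower (m j : ℕ) : m ^ j ≤ stirling2 (m + j) m := by
  induction j with
  | zero => simpa using s2_self m
  | succ j ih =>
    cases m with
    | zero => simp
    | succ m =>
      rw [← add_assoc]
      simp only [stirling2, pow_succ]
      nlinarith

theorem fls_upper (l m k : ℕ) (hm : 1 ≤ m) :
    fls l (l + m) k ≤ m.factorial * (k ^ l * m ^ k) := by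
  unfold fls
  have h1 := Nat.descFactorial_le_pow k l
  have h2 : stirling2 (k - l) m ≤ m ^ k :=
    (s2_upper _ _).trans (Nat.pow_le_pow_right hm (Nat.sub_le _ _))
  rw [Nat.add_sub_cancel_left]
  calc _ ≤ k ^ l * m.factorial * m ^ k := by gcongr
    _ = _ := by ring

theorem fls_lower (l m k : ℕ) (hm : 1 ≤ m) (hk : 2 * l + m ≤ k) :
    k ^ l * m ^ k ≤ (2 ^ l * m ^ (l + m)) * fls l (l + m) k := by
  unfold fls
  rw [Nat.add_sub_cancel_left]
  have h1 : k ^ l ≤ 2 ^ l * k.descFactorial l := by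
    calc k ^ l ≤ (2 * (k + 1 - l)) ^ l := Nat.pow_le_pow_left (by omega) _
      _ = 2 ^ l * (k + 1 - l) ^ l := mul_pow _ _ _
      _ ≤ _ := by gcongr; exact Nat.pow_sub_le_descFactorial k l
  obtain ⟨j, rfl⟩ : ∃ j, k = l + (m + j) := ⟨k - l - m, by omega⟩
  have h2 := s2_lower m j
  rw [Nat.add_sub_cancel_left]
  have h3 : 1 ≤ m.factorial := Nat.factorial_pos m
  calc (l + (m + j)) ^ l * m ^ (l + (m + j))
      ≤ (2 ^ l * (l + (m + j)).descFactorial l) * (m ^ (l + m) * (1 * stirling2 (m + j) m)) := by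
        rw [← add_assoc, pow_add m (l + m) j, one_mul, add_assoc]; gcongr
    _ ≤ (2 ^ l * (l + (m + j)).descFactorial l) * (m ^ (l + m) * (m.factorial * stirling2 (m + j) m)) := by
        gcongr
    _ = _ := by ring

open Filter Asymptotics in
theorem fls_bigO (l m : ℕ) (hm : 1 ≤ m) :
    (fun k : ℕ => (fls l (l + m) k : ℝ)) =O[atTop] (fun k : ℕ => (k : ℝ) ^ l * (m : ℝ) ^ k) := by
  refine IsBigO.of_bound (m.factorial : ℝ) (Eventually.of_forall fun k => ?_)
  rw [Real.norm_of_nonneg (by positivity), Real.norm_of_nonneg (by positivity)]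
  exact_mod_cast fls_upper l m k hm

open Filter Asymptotics in
theorem fls_bigO' (l m : ℕ) (hm : 1 ≤ m) :
    (fun k : ℕ => (k : ℝ) ^ l * (m : ℝ) ^ k) =O[atTop] (fun k : ℕ => (fls l (l + m) k : ℝ)) := by
  refine IsBigO.of_bound ((2 ^ l * m ^ (l + m) : ℕ) : ℝ) ?_
  filter_upwards [eventually_ge_atTop (2 * l + m)] with k hk
  rw [Real.norm_of_nonneg (by positivity), Real.norm_of_nonneg (by positivity)]
  exact_mod_cast fls_lower l m k hm hk

open Filter Asymptotics in
theorem g_littleO (l m l' m' : ℕ) (h : m < m' ∨ (m = m' ∧ l < l')) :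
    (fun k : ℕ => (k : ℝ) ^ l * (m : ℝ) ^ k) =o[atTop]
      (fun k : ℕ => (k : ℝ) ^ l' * (m' : ℝ) ^ k) := by
  rcases h with h | ⟨rfl, h⟩
  · have h1 : (fun k : ℕ => (k : ℝ) ^ l * (m : ℝ) ^ k) =o[atTop] (fun k : ℕ => (m' : ℝ) ^ k) :=
      isLittleO_pow_const_mul_const_pow_const_pow_of_norm_lt l (by simpa using h)
    refine h1.trans_isBigO (IsBigO.of_bound 1 ?_)
    filter_upwards [eventually_ge_atTop 1] with k hk
    rw [Real.norm_of_nonneg (by positivity), Real.norm_of_nonneg (by positivity), one_mul]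
    have : (1 : ℝ) ≤ (k : ℝ) ^ l' := one_le_pow₀ (by exact_mod_cast hk)
    exact le_mul_of_one_le_left (by positivity) this
  · refine IsLittleO.mul_isBigO ?_ (isBigO_refl _ _)
    exact (isLittleO_pow_pow_atTop_of_lt h).comp_tendsto tendsto_natCast_atTop_atTop

open Filter Asymptotics in
theorem fls_littleO (l s l' s' : ℕ) (hl : l < s) (hl' : l' < s')
    (h : s - l < s' - l' ∨ (s - l = s' - l' ∧ l < l')) :
    (fun k : ℕ => (fls l s k : ℝ)) =o[atTop] (fun k : ℕ => (fls l' s' k : ℝ)) := by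
  have h1 := fls_bigO l (s - l) (by omega)
  have h2 := fls_bigO' l' (s' - l') (by omega)
  rw [Nat.add_sub_cancel' hl.le] at h1
  rw [Nat.add_sub_cancel' hl'.le] at h2
  exact h1.trans_isLittleO ((g_littleO _ _ _ _ h).trans_isBigO h2)

theorem fls_pos (l s k : ℕ) (hl : l < s) (hk : 2 * s + 1 ≤ k) : 0 < fls l s k := by
  have := fls_lower l (s - l) k (by omega) (by omega)
  rw [Nat.add_sub_cancel' hl.le] at this
  have h2 : 0 < k ^ l * (s - l) ^ k := by
    have : 0 < s - l := by omega
    have : 0 < k := by omega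
    positivity
  exact Nat.pos_of_mul_pos_left (h2.trans_le this)

abbrev PP (d : ℕ) := {p : Fin (d + 1) × Fin (d + 1) // p.1 < p.2}

open Filter Asymptotics in
theorem fls_indep (d : ℕ) (c : PP d → ℝ)
    (h : ∀ k : ℕ, d < k → ∑ p, c p * (fls p.1.1 p.1.2 k : ℝ) = 0) : c = 0 := by
  classical
  by_contra hc
  obtain ⟨p0, hp0⟩ := Function.ne_iff.mp hc
  let key : PP d → Lex (ℕ × ℕ) := fun p => toLex ((p.1.2 : ℕ) - (p.1.1 : ℕ), (p.1.1 : ℕ))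
  obtain ⟨p, hp, hmax⟩ := Finset.exists_max_image (Finset.univ.filter fun p => c p ≠ 0) key
    ⟨p0, by simpa using hp0⟩
  have hcp : c p ≠ 0 := by simpa using hp
  have ho : (fun k : ℕ => ∑ q ∈ Finset.univ.erase p, c q * (fls q.1.1 q.1.2 k : ℝ)) =o[atTop]
      (fun k : ℕ => (fls p.1.1 p.1.2 k : ℝ)) := by
    apply IsLittleO.fun_sum; intro q hq
    have hqp : q ≠ p := (Finset.mem_erase.mp hq).1
    by_cases hcq : c q = 0
    · simp [hcq]
    refine IsLittleO.const_mul_left (fls_littleO _ _ _ _ q.2 p.2 ?_) _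
    have hle := hmax q (by simpa using hcq)
    rw [Prod.Lex.le_iff] at hle
    simp only [key, ofLex_toLex] at hle
    have hq2 : (q.1.1 : ℕ) < q.1.2 := q.2
    have hp2 : (p.1.1 : ℕ) < p.1.2 := p.2
    have hne : ¬ ((q.1.1 : ℕ) = p.1.1 ∧ (q.1.2 : ℕ) = p.1.2) := fun ⟨h1, h2⟩ =>
      hqp (Subtype.ext (Prod.ext (Fin.ext h1) (Fin.ext h2)))
    omega
  have ho2 : (fun k : ℕ => - (c p) * (fls p.1.1 p.1.2 k : ℝ)) =o[atTop]
      (fun k : ℕ => (fls p.1.1 p.1.2 k : ℝ)) := by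
    refine ho.congr' ?_ (EventuallyEq.refl _ _)
    filter_upwards [eventually_gt_atTop d] with k hk
    have := h k hk
    rw [← Finset.add_sum_erase _ _ (Finset.mem_univ p)] at this
    linarith
  rw [isLittleO_const_mul_left_iff (neg_ne_zero.mpr hcp)] at ho2
  have hev : ∀ᶠ k : ℕ in atTop, (fls p.1.1 p.1.2 k : ℝ) ≠ 0 := by
    filter_upwards [eventually_ge_atTop (2 * (p.1.2 : ℕ) + 1)] with k hk
    have := fls_pos p.1.1 p.1.2 k p.2 hk
    exact_mod_cast this.ne'
  exact isLittleO_irrefl hev.frequently ho2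

theorem card_PP (d : ℕ) : Fintype.card (PP d) = d * (d + 1) / 2 := by
  classical
  rw [Fintype.card_subtype, Finset.card_filter, Fintype.sum_prod_type_right]
  have : ∀ y : Fin (d + 1), (∑ x : Fin (d + 1), if x < y then 1 else 0) = (y : ℕ) := by
    intro y
    rw [← Finset.card_filter, ← Fin.card_Iio y]
    congr 1
    ext x
    simp
  simp only [this]
  rw [Fin.sum_univ_eq_sum_range (fun i => i), Finset.sum_range_id, Nat.add_sub_cancel, mul_comm]

theorem span_top (d : ℕ) :
    Submodule.span ℝ (Set.range fun (k : {k : ℕ // d < k}) (p : PP d) =>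
      (fls p.1.1 p.1.2 k.1 : ℝ)) = ⊤ := by
  classical
  by_contra hne
  obtain ⟨f, hf, hle⟩ := Submodule.exists_le_ker_of_lt_top _ (lt_top_iff_ne_top.mpr hne)
  apply hf
  have h0 : (fun p => f (Pi.single p 1)) = 0 := by
    apply fls_indep d
    intro k hk
    have h1 : f (fun p : PP d => (fls p.1.1 p.1.2 k : ℝ)) = 0 :=
      hle (Submodule.subset_span ⟨⟨k, hk⟩, rfl⟩)
    rw [LinearMap.pi_apply_eq_sum_univ] at h1
    rw [← h1]
    refine Finset.sum_congr rfl fun p _ => ?_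
    rw [smul_eq_mul, mul_comm]
    congr 2
    ext q
    simp [Pi.single_apply, eq_comm]
  refine LinearMap.pi_ext' fun p => ?_
  ext
  simpa using congrFun h0 p

/-- For `d ≥ 2` and `N = d(d+1)/2`, there are integers `d < k₁ < ⋯ < k_N` such that the
`N×N` matrix with entries `f_{ℓ,s}(k_i)`, columns indexed by pairs `0 ≤ ℓ < s ≤ d`,
has full rank. -/
theorem stmt8 (d : ℕ) (hd : 2 ≤ d) :
    ∃ k : Fin (d * (d + 1) / 2) → ℕ, StrictMono k ∧ (∀ i, d < k i) ∧
      (Matrix.of fun (i : Fin (d * (d + 1) / 2))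
          (p : {p : Fin (d + 1) × Fin (d + 1) // p.1 < p.2}) =>
        ((fls (p.1.1 : ℕ) (p.1.2 : ℕ) (k i) : ℕ) : ℝ)).rank = d * (d + 1) / 2 := by
  classical
  obtain ⟨κ, a, ha, hspan, hli⟩ := exists_linearIndependent' ℝ
    (fun (k : {k : ℕ // d < k}) (p : PP d) => (fls p.1.1 p.1.2 k.1 : ℝ))
  rw [span_top] at hspan
  have : Finite κ := hli.finite
  have := Fintype.ofFinite κ
  have hcard : Fintype.card κ = d * (d + 1) / 2 := by
    rw [← card_PP d, ← finrank_span_eq_card hli, hspan, finrank_top, Module.finrank_fintype_fun_eq_card]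
  have hinj : Function.Injective fun x : κ => (a x).1 := Subtype.val_injective.comp ha
  let t : Finset ℕ := Finset.univ.image fun x : κ => (a x).1
  have ht : t.card = d * (d + 1) / 2 := by
    rw [Finset.card_image_of_injective _ hinj, Finset.card_univ, hcard]
  have hmem : ∀ i, ∃ x : κ, (a x).1 = t.orderEmbOfFin ht i := fun i => by
    obtain ⟨x, _, hx⟩ := Finset.mem_image.mp (t.orderEmbOfFin_mem ht i)
    exact ⟨x, hx⟩
  choose e he using hmem
  have heinj : Function.Injective e := fun i j hij =>
    (t.orderEmbOfFin ht).injective (by rw [← he, ← he, hij])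
  refine ⟨t.orderEmbOfFin ht, (t.orderEmbOfFin ht).strictMono, fun i => ?_, ?_⟩
  · rw [← he]; exact (a (e i)).2
  · have := hli.comp e heinj
    rw [LinearIndependent.rank_matrix, Fintype.card_fin]
    have heq : (Matrix.of fun (i : Fin (d * (d + 1) / 2)) (p : PP d) =>
        ((fls (p.1.1 : ℕ) (p.1.2 : ℕ) (t.orderEmbOfFin ht i) : ℕ) : ℝ)).row =
        ((fun (k : {k : ℕ // d < k}) (p : PP d) => (fls p.1.1 p.1.2 k.1 : ℝ)) ∘ a) ∘ e := by
      ext i p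
      simp [he]
    rw [heq]
    exact this
end

section
/- Let d ≥ 2 be an integer and let (β_{ℓ,s}) be a family of real numbers indexed by the pairs (ℓ,s) of integers with 0 ≤ ℓ < s ≤ d. If the linear combination Σ_{0 ≤ ℓ < s ≤ d} β_{ℓ,s} · f_{ℓ,s}(k) equals 0 for all sufficiently large integers k, then β_{ℓ,s} = 0 for every pair (ℓ,s). In other words, the functions k ↦ f_{ℓ,s}(k), for 0 ≤ ℓ < s ≤ d, are linearly independent as real-valued functions of k. -/
open Filter Topology

lemma st_self (m : ℕ) : 0 < stirling2 m m := by
  induction m with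
  | zero => simp [stirling2]
  | succ m ih => simp only [stirling2]; omega

lemma st_sum (m n : ℕ) : (stirling2 n (m+1) : ℝ) / ((m:ℝ)+1)^n
    = ∑ i ∈ Finset.range n, (stirling2 i m : ℝ) / ((m:ℝ)+1)^(i+1) := by
  induction n with
  | zero => simp [stirling2]
  | succ n ih =>
    rw [Finset.sum_range_succ, ← ih]
    have : (m:ℝ)+1 ≠ 0 := by positivity
    simp only [stirling2]
    push_cast
    field_simp
    ring

lemma st_lim_of (m : ℕ) (h : Summable fun i => (stirling2 i m : ℝ) / ((m:ℝ)+1)^(i+1)) :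
    ∃ c : ℝ, 0 < c ∧ Tendsto (fun n => (stirling2 n (m+1) : ℝ) / ((m:ℝ)+1)^n) atTop (𝓝 c) := by
  refine ⟨_, ?_, (h.hasSum.tendsto_sum_nat).congr fun n => (st_sum m n).symm⟩
  refine h.tsum_pos (fun i => by positivity) m ?_
  have : (0:ℝ) < stirling2 m m := by exact_mod_cast st_self m
  positivity

lemma st_summable (m : ℕ) : Summable fun i => (stirling2 i m : ℝ) / ((m:ℝ)+1)^(i+1) := by
  induction m with
  | zero =>
    refine summable_of_ne_finset_zero (s := {0}) ?_
    intro b hb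
    cases b with
    | zero => simp at hb
    | succ b => simp [stirling2]
  | succ m ih =>
    obtain ⟨c, hc, hl⟩ := st_lim_of m ih
    obtain ⟨B, hB⟩ := hl.bddAbove_range
    have hr : Summable fun i : ℕ => B * (((m:ℝ)+1)/((m:ℝ)+2))^i :=
      (summable_geometric_of_lt_one (by positivity)
        (by rw [div_lt_one (by positivity)]; linarith)).mul_left B
    refine Summable.of_nonneg_of_le (fun i => by positivity) (fun i => ?_) hr
    have h1 : (stirling2 i (m+1) : ℝ) / ((m:ℝ)+1)^i ≤ B := hB ⟨i, rfl⟩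
    have h2 : (stirling2 i (m+1) : ℝ) ≤ B * ((m:ℝ)+1)^i := by
      rwa [div_le_iff₀ (by positivity)] at h1
    have e : (((m+1:ℕ):ℝ)+1) = (m:ℝ)+2 := by push_cast; ring
    rw [e, div_pow, ← mul_div_assoc]
    have h3 : (stirling2 i (m+1) : ℝ) / ((m:ℝ)+2)^(i+1) ≤ stirling2 i (m+1) / ((m:ℝ)+2)^i := by
      gcongr
      · have : (0:ℝ) ≤ m := by positivity
        linarith
      · omega
    exact h3.trans (by gcongr)

lemma st_lim (m : ℕ) (hm : 0 < m) :
    ∃ c : ℝ, 0 < c ∧ Tendsto (fun n => (stirling2 n m : ℝ) / (m:ℝ)^n) atTop (𝓝 c) := by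
  obtain ⟨m, rfl⟩ : ∃ m', m = m' + 1 := ⟨m - 1, by omega⟩
  simpa using st_lim_of m (st_summable m)

lemma desc_lim (l : ℕ) :
    Tendsto (fun k : ℕ => (k.descFactorial l : ℝ) / (k:ℝ)^l) atTop (𝓝 1) := by
  induction l with
  | zero => simp
  | succ l ih =>
    have h1 : Tendsto (fun k : ℕ => 1 - (l:ℝ) / (k:ℝ)) atTop (𝓝 (1 - 0)) :=
      tendsto_const_nhds.sub (tendsto_const_div_atTop_nhds_zero_nat (l:ℝ))
    have h2 := h1.mul ih
    simp only [sub_zero, mul_one] at h2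
    refine h2.congr' ?_
    filter_upwards [eventually_ge_atTop (l+1)] with k hk
    have hk0 : (k:ℝ) ≠ 0 := by
      have : k ≠ 0 := by omega
      exact_mod_cast this
    rw [Nat.descFactorial_succ]
    push_cast [Nat.cast_sub (show l ≤ k by omega)]
    field_simp
    ring

lemma fls_lim (l s : ℕ) (h : l < s) :
    ∃ c : ℝ, 0 < c ∧ Tendsto (fun k : ℕ => (fls l s k : ℝ) / ((k:ℝ)^l * ((s-l:ℕ):ℝ)^k))
      atTop (𝓝 c) := by
  obtain ⟨c, hc, hl⟩ := st_lim (s-l) (by omega)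
  set m := s - l with hm
  have hm0 : (0:ℝ) < m := by
    have : 0 < m := by omega
    exact_mod_cast this
  refine ⟨1 * (m.factorial / (m:ℝ)^l * c), by positivity, ?_⟩
  have h1 := hl.comp (tendsto_sub_atTop_nat l)
  refine ((desc_lim l).mul (h1.const_mul ((m.factorial:ℝ) / (m:ℝ)^l))).congr' ?_
  filter_upwards [eventually_ge_atTop (l+1)] with k hk
  have hk0 : (k:ℝ) ≠ 0 := by
    have : k ≠ 0 := by omega
    exact_mod_cast this
  have e : (m:ℝ)^k = (m:ℝ)^l * (m:ℝ)^(k-l) := by rw [← pow_add]; congr 1; omega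
  simp only [fls, Function.comp, e, ← hm]
  push_cast
  field_simp

lemma ratio_lim (l m l' m' : ℕ) (hm' : 0 < m') (h : m < m' ∨ (m = m' ∧ l < l')) :
    Tendsto (fun k : ℕ => ((k:ℝ)^l * (m:ℝ)^k) / ((k:ℝ)^l' * (m':ℝ)^k)) atTop (𝓝 0) := by
  have hm0 : (0:ℝ) < m' := by exact_mod_cast hm'
  rcases h with h | ⟨rfl, h⟩
  · have hlt : |(m:ℝ)/m'| < 1 := by
      rw [abs_of_nonneg (by positivity), div_lt_one hm0]
      exact_mod_cast h
    refine squeeze_zero' (.of_forall fun k => by positivity) ?_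
      (tendsto_pow_const_mul_const_pow_of_abs_lt_one l hlt)
    filter_upwards [eventually_ge_atTop 1] with k hk
    have hk1 : (1:ℝ) ≤ k := by exact_mod_cast hk
    rw [div_pow, ← mul_div_assoc]
    gcongr
    exact le_mul_of_one_le_left (by positivity) (one_le_pow₀ hk1)
  · refine squeeze_zero' (.of_forall fun k => by positivity) ?_
      (tendsto_const_div_atTop_nhds_zero_nat (1:ℝ))
    filter_upwards [eventually_ge_atTop 1] with k hk
    have hk1 : (1:ℝ) ≤ k := by exact_mod_cast hk
    have hk0 : (0:ℝ) < k := by linarith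
    rw [mul_div_mul_right _ _ (by positivity), div_le_div_iff₀ (by positivity) hk0, one_mul,
      ← pow_succ]
    exact pow_le_pow_right₀ hk1 h

/-- The functions `k ↦ f_{ℓ,s}(k)` for `0 ≤ ℓ < s ≤ d` are linearly independent: if a
real linear combination of them vanishes for all sufficiently large `k`, then all the
coefficients are zero. -/
theorem stmt9 (d : ℕ) (hd : 2 ≤ d)
    (β : {p : Fin (d + 1) × Fin (d + 1) // p.1 < p.2} → ℝ)
    (h : ∃ K : ℕ, ∀ k : ℕ, K ≤ k →
      ∑ p : {p : Fin (d + 1) × Fin (d + 1) // p.1 < p.2},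
        β p * ((fls (p.1.1 : ℕ) (p.1.2 : ℕ) k : ℕ) : ℝ) = 0) :
    ∀ p, β p = 0 := by
  classical
  by_contra! hne
  obtain ⟨q, hq⟩ := hne
  obtain ⟨K, hK⟩ := h
  let key : {p : Fin (d + 1) × Fin (d + 1) // p.1 < p.2} → ℕ ×ₗ ℕ :=
    fun p => toLex ((p.1.2 : ℕ) - (p.1.1 : ℕ), (p.1.1 : ℕ))
  obtain ⟨p0, hp0, hmax⟩ := Finset.exists_max_image
    (Finset.univ.filter fun p => β p ≠ 0) key ⟨q, by simpa using hq⟩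
  simp only [Finset.mem_filter, Finset.mem_univ, true_and] at hp0 hmax
  have hlt : ∀ p : {p : Fin (d + 1) × Fin (d + 1) // p.1 < p.2}, (p.1.1 : ℕ) < (p.1.2 : ℕ) :=
    fun p => p.2
  choose c hc hcl using fun p : {p : Fin (d + 1) × Fin (d + 1) // p.1 < p.2} =>
    fls_lim p.1.1 p.1.2 (hlt p)
  have hpos0 : 0 < (p0.1.2 : ℕ) - (p0.1.1 : ℕ) := by have := hlt p0; omega
  have key_lim : ∀ p, Tendsto (fun k : ℕ => β p * (fls (p.1.1 : ℕ) (p.1.2 : ℕ) k : ℝ) /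
      ((k:ℝ)^(p0.1.1:ℕ) * (((p0.1.2 : ℕ) - (p0.1.1 : ℕ) : ℕ):ℝ)^k)) atTop
      (𝓝 (if p = p0 then β p0 * c p0 else 0)) := by
    intro p
    by_cases hp : p = p0
    · subst hp
      simp only [if_true]
      refine ((hcl p).const_mul (β p)).congr fun k => ?_
      rw [mul_div_assoc]
    · simp only [hp, if_false]
      by_cases hb : β p = 0
      · simp [hb]
      · have hk := hmax p hb
        simp only [key, Prod.Lex.toLex_le_toLex] at hk
        have hk' : (p.1.2 : ℕ) - (p.1.1 : ℕ) < (p0.1.2 : ℕ) - (p0.1.1 : ℕ) ∨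
            ((p.1.2 : ℕ) - (p.1.1 : ℕ) = (p0.1.2 : ℕ) - (p0.1.1 : ℕ) ∧
              (p.1.1 : ℕ) < (p0.1.1 : ℕ)) := by
          rcases hk with hk | ⟨h1, h2⟩
          · exact Or.inl hk
          · refine Or.inr ⟨h1, lt_of_le_of_ne h2 fun h3 => hp ?_⟩
            have a := hlt p
            have b := hlt p0
            apply Subtype.ext
            apply Prod.ext <;> apply Fin.ext
            · exact h3
            · omega
        have hr := ((hcl p).const_mul (β p)).mul (ratio_lim _ _ _ _ hpos0 hk')
        rw [mul_zero] at hr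
        refine hr.congr' ?_
        filter_upwards [eventually_ge_atTop 1] with k hk
        have hk0 : (0:ℝ) < k := by exact_mod_cast hk
        have hm0 : (0:ℝ) < ((p.1.2 : ℕ) - (p.1.1 : ℕ) : ℕ) := by
          have := hlt p
          exact_mod_cast (by omega : 0 < (p.1.2 : ℕ) - (p.1.1 : ℕ))
        have hz : (k:ℝ)^(p.1.1:ℕ) * (((p.1.2 : ℕ) - (p.1.1 : ℕ) : ℕ):ℝ)^k ≠ 0 := by positivity
        rw [mul_assoc, div_mul_div_cancel₀ hz, mul_div_assoc]
  have hsum := tendsto_finsetSum Finset.univ fun p _ => key_lim p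
  simp only [Finset.sum_ite_eq', Finset.mem_univ, if_true] at hsum
  have hzero := tendsto_const_nhds (x := (0:ℝ)) (f := (atTop : Filter ℕ))
  have hu := tendsto_nhds_unique (hsum.congr' (f₂ := fun _ => (0:ℝ)) (by
    filter_upwards [eventually_ge_atTop K] with k hk
    rw [← Finset.sum_div, hK k hk, zero_div])) hzero
  exact (mul_ne_zero hp0 (hc p0).ne') hu
end

section
/- Let ℓ ≥ 0 and m ≥ 1 be integers, and let k be an integer with k ≥ 2ℓ² + m·ln(2m). Then (1/4)·k^ℓ·m^{k−ℓ} ≤ k⁽ℓ⁾ · m! · S(k−ℓ, m) ≤ k^ℓ·m^{k−ℓ}. -/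
theorem surj_upper (m n : ℕ) : m.factorial * stirling2 n m ≤ m ^ n := by
  rw [← stirling2_sum m n, Finset.sum_range_succ, Nat.descFactorial_self, mul_comm]
  exact Nat.le_add_left _ _

theorem surj_lower (p n : ℕ) :
    (p + 1) ^ n ≤ (p + 1).factorial * stirling2 n (p + 1) + (p + 1) * p ^ n := by
  rw [← stirling2_sum (p + 1) n, Finset.sum_range_succ, Nat.descFactorial_self,
    ← stirling2_sum p n, Finset.mul_sum, add_comm, mul_comm (stirling2 n (p + 1))]
  refine Nat.add_le_add_left (Finset.sum_le_sum fun j hj => ?_) _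
  have hj' : j < p + 1 := by simpa using hj
  have h := Nat.succ_descFactorial p j
  have h1 : 1 ≤ p + 1 - j := by omega
  have : (p + 1).descFactorial j ≤ (p + 1) * p.descFactorial j := by
    rw [← h]; exact Nat.le_mul_of_pos_left _ h1
  calc _ ≤ stirling2 n j * ((p + 1) * p.descFactorial j) := Nat.mul_le_mul_left _ this
    _ = _ := by ring

theorem desc_lower (l k : ℕ) (hk0 : 0 < k) (hk : 2 * (l : ℝ) ^ 2 ≤ k) :
    (1 / 2 : ℝ) * (k : ℝ) ^ l ≤ (k.descFactorial l : ℝ) := by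
  have hk' : 2 * l ^ 2 ≤ k := by exact_mod_cast hk
  have hlk : l ≤ k := by nlinarith
  have hkr : (0 : ℝ) < k := by exact_mod_cast hk0
  have h1 : ((k : ℝ) - l) ^ l ≤ (k.descFactorial l : ℝ) := by
    have h := Nat.pow_sub_le_descFactorial k l
    have h2 : (k - l) ^ l ≤ (k + 1 - l) ^ l := Nat.pow_le_pow_left (by omega) _
    have h3 : (((k - l) ^ l : ℕ) : ℝ) ≤ (k.descFactorial l : ℝ) := by exact_mod_cast h2.trans h
    rwa [Nat.cast_pow, Nat.cast_sub hlk] at h3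
  have hl1 : (l : ℝ) / k ≤ 1 := by
    rw [div_le_one hkr]; exact_mod_cast hlk
  have hb := one_add_mul_le_pow (a := -((l : ℝ) / k)) (by linarith) l
  have h4 : (l : ℝ) * ((l : ℝ) / k) ≤ 1 / 2 := by
    rw [← mul_div_assoc, div_le_iff₀ hkr]; nlinarith
  have h5 : ((k : ℝ) - l) ^ l = (1 + -((l : ℝ) / k)) ^ l * (k : ℝ) ^ l := by
    rw [← mul_pow]; congr 1; field_simp; ring
  refine le_trans ?_ h1
  rw [h5]
  refine mul_le_mul_of_nonneg_right ?_ (by positivity)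
  linarith

theorem pow_bound (p n : ℕ)
    (hn : ((p : ℝ) + 1) * Real.log (2 * ((p : ℝ) + 1)) ≤ n) :
    ((p : ℝ) + 1) * (p : ℝ) ^ n ≤ 1 / 2 * ((p : ℝ) + 1) ^ n := by
  have hM : (0 : ℝ) < (p : ℝ) + 1 := by positivity
  set M : ℝ := (p : ℝ) + 1 with hMd
  have h1 : (p : ℝ) ≤ M * Real.exp (-(1 / M)) := by
    have h := Real.add_one_le_exp (-(1 / M))
    have h2 := mul_le_mul_of_nonneg_left h hM.le
    have h3 : M * (-(1 / M) + 1) = p := by field_simp; linarith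
    linarith
  have h2 : (p : ℝ) ^ n ≤ (M * Real.exp (-(1 / M))) ^ n :=
    pow_le_pow_left₀ (by positivity) h1 n
  rw [mul_pow, ← Real.exp_nat_mul] at h2
  have h3 : Real.exp (n * -(1 / M)) ≤ 1 / (2 * M) := by
    have : (n : ℝ) * -(1 / M) ≤ -Real.log (2 * M) := by
      have : Real.log (2 * M) ≤ n / M := by rw [le_div_iff₀ hM]; linarith
      have e : (n : ℝ) * -(1 / M) = -(n / M) := by ring
      linarith
    refine (Real.exp_le_exp.mpr this).trans ?_
    rw [Real.exp_neg, Real.exp_log (by positivity), one_div]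
  have h4 : (p : ℝ) ^ n ≤ M ^ n * (1 / (2 * M)) :=
    h2.trans (mul_le_mul_of_nonneg_left h3 (by positivity))
  calc M * (p : ℝ) ^ n ≤ M * (M ^ n * (1 / (2 * M))) := mul_le_mul_of_nonneg_left h4 hM.le
    _ = 1 / 2 * M ^ n := by field_simp

/-- For integers `ℓ ≥ 0`, `m ≥ 1` and `k ≥ 2ℓ² + m·ln(2m)`:
`(1/4)·k^ℓ·m^(k−ℓ) ≤ k⁽ℓ⁾ · m! · S(k−ℓ, m) ≤ k^ℓ·m^(k−ℓ)`. -/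
theorem stmt10 (ℓ m k : ℕ) (hm : 1 ≤ m)
    (hk : (k : ℝ) ≥ 2 * (ℓ : ℝ) ^ 2 + (m : ℝ) * Real.log (2 * (m : ℝ))) :
    (1 / 4 : ℝ) * (k : ℝ) ^ ℓ * (m : ℝ) ^ (k - ℓ) ≤
        ((k.descFactorial ℓ * Nat.factorial m * stirling2 (k - ℓ) m : ℕ) : ℝ) ∧
      ((k.descFactorial ℓ * Nat.factorial m * stirling2 (k - ℓ) m : ℕ) : ℝ) ≤
        (k : ℝ) ^ ℓ * (m : ℝ) ^ (k - ℓ) := by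
  obtain ⟨p, rfl⟩ := Nat.exists_eq_add_of_le' hm
  have hlog : 0 < Real.log (2 * ((p : ℝ) + 1)) := Real.log_pos (by
    have : (0 : ℝ) ≤ p := by positivity
    linarith)
  have hmul : 0 < ((p : ℝ) + 1) * Real.log (2 * ((p : ℝ) + 1)) :=
    mul_pos (by positivity) hlog
  push_cast at hk
  have hk2 : 2 * (ℓ : ℝ) ^ 2 ≤ k := by linarith
  have hk0 : 0 < k := by
    have : (0 : ℝ) < k := by nlinarith [sq_nonneg (ℓ : ℝ)]
    exact_mod_cast this
  have hl2 : (ℓ : ℝ) ≤ (ℓ : ℝ) ^ 2 := by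
    exact_mod_cast Nat.le_self_pow (two_ne_zero) ℓ
  have hlk : ℓ ≤ k := by
    have : (ℓ : ℝ) ≤ k := by nlinarith [sq_nonneg (ℓ : ℝ)]
    exact_mod_cast this
  have hn : ((p : ℝ) + 1) * Real.log (2 * ((p : ℝ) + 1)) ≤ ((k - ℓ : ℕ) : ℝ) := by
    rw [Nat.cast_sub hlk]; nlinarith [sq_nonneg (ℓ : ℝ)]
  have hd := desc_lower ℓ k hk0 hk2
  have hp := pow_bound p (k - ℓ) hn
  have hs : ((p : ℝ) + 1) ^ (k - ℓ) ≤
      (((p + 1).factorial * stirling2 (k - ℓ) (p + 1) : ℕ) : ℝ) + ((p : ℝ) + 1) * (p : ℝ) ^ (k - ℓ) := by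
    exact_mod_cast surj_lower p (k - ℓ)
  constructor
  · rw [mul_assoc (k.descFactorial ℓ), Nat.cast_mul (k.descFactorial ℓ)]
    push_cast [-Nat.cast_mul]
    calc _ = ((1 / 2 : ℝ) * (k : ℝ) ^ ℓ) * (1 / 2 * ((p : ℝ) + 1) ^ (k - ℓ)) := by ring
      _ ≤ _ := mul_le_mul hd (by linarith) (by positivity) (by positivity)
  · rw [mul_assoc]
    exact_mod_cast Nat.mul_le_mul (Nat.descFactorial_le_pow k ℓ) (surj_upper (p + 1) (k - ℓ))
end
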